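/- arXiv:2504.05921 — 14 statements merged into one kernel-verified Lean document; each statement's English description precedes it below -/
import Mathlib

section
/- For every pose p and every φ with 0 ≤ φ ≤ π/2, the right-hand circle center displaced by a forward left turn of central angle φ satisfies ‖c_R(L⁺_φ(p)) − c_R(p)‖ = 4r sin(φ/2), and hence ‖c_R(L⁺_φ(p)) − c_R(p)‖ ≤ 2√2 r, with equality if and only if φ = π/2. -/
open Real

/-- A pose `(x, y, θ)`: planar position plus heading angle. -/
structure Pose where
  x : ℝ
  y : ℝ
  θ : ℝ

/-- The planar position of a pose, as a complex number (so `‖·‖` is the Euclidean norm on `ℝ²`). -/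
noncomputable def pos (p : Pose) : ℂ := ⟨p.x, p.y⟩

/-- Left-hand circle (LHC) center of a pose, for turning radius `r`. -/
noncomputable def cL (r : ℝ) (p : Pose) : ℂ := ⟨p.x - r * Real.sin p.θ, p.y + r * Real.cos p.θ⟩

/-- Right-hand circle (RHC) center of a pose, for turning radius `r`. -/
noncomputable def cR (r : ℝ) (p : Pose) : ℂ := ⟨p.x + r * Real.sin p.θ, p.y - r * Real.cos p.θ⟩

/-- Forward left turn `L⁺_φ` with turning radius `r`. -/
noncomputable def Lplus (r φ : ℝ) (p : Pose) : Pose :=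
  ⟨p.x + r * (Real.sin (p.θ + φ) - Real.sin p.θ),
   p.y - r * (Real.cos (p.θ + φ) - Real.cos p.θ),
   p.θ + φ⟩

/-- Backward left turn `L⁻_φ` with turning radius `r`. -/
noncomputable def Lminus (r φ : ℝ) (p : Pose) : Pose :=
  ⟨p.x + r * (Real.sin (p.θ - φ) - Real.sin p.θ),
   p.y - r * (Real.cos (p.θ - φ) - Real.cos p.θ),
   p.θ - φ⟩

/-- Forward right turn `R⁺_φ` with turning radius `r`. -/
noncomputable def Rplus (r φ : ℝ) (p : Pose) : Pose :=
  ⟨p.x - r * (Real.sin (p.θ - φ) - Real.sin p.θ),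
   p.y + r * (Real.cos (p.θ - φ) - Real.cos p.θ),
   p.θ - φ⟩

/-- Backward right turn `R⁻_φ` with turning radius `r`. -/
noncomputable def Rminus (r φ : ℝ) (p : Pose) : Pose :=
  ⟨p.x - r * (Real.sin (p.θ + φ) - Real.sin p.θ),
   p.y + r * (Real.cos (p.θ + φ) - Real.cos p.θ),
   p.θ + φ⟩

/-- Forward straight motion `S⁺_u`. -/
noncomputable def Splus (u : ℝ) (p : Pose) : Pose :=
  ⟨p.x + u * Real.cos p.θ, p.y + u * Real.sin p.θ, p.θ⟩

/-- Backward straight motion `S⁻_u`. -/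
noncomputable def Sminus (u : ℝ) (p : Pose) : Pose :=
  ⟨p.x - u * Real.cos p.θ, p.y - u * Real.sin p.θ, p.θ⟩

/-- Rotation of the plane by angle `γ` about the point `c`. -/
noncomputable def Rot (c : ℂ) (γ : ℝ) (z : ℂ) : ℂ :=
  c + Complex.exp (γ * Complex.I) * (z - c)

/-- `atan2 b a`: the unique angle in `(−π, π]` with `(a, b) = ‖(a,b)‖ (cos α, sin α)`. -/
noncomputable def atan2 (b a : ℝ) : ℝ := Complex.arg ⟨a, b⟩

/-!
Since `c_R(p) = (x, y) + r (sin θ, -cos θ)` and the turn itself adds `r (sin, -cos)(θ + φ) -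
r (sin, -cos)(θ)` to the position, the displacement of the RHC center is `2 r` times a chord of
the unit circle subtending the angle `φ`. Such a chord has length `2 sin (φ/2)`. On `[0, π/2]`
the half angle stays in `[0, π/4]`, where `sin` is strictly increasing with maximum
`sin (π/4) = √2/2`; this yields the bound and its equality case.
-/

theorem RHC_displacement_under_left_turn (r : ℝ) (hr : 0 < r) (p : Pose) (φ : ℝ)
    (hφ₀ : 0 ≤ φ) (hφ₁ : φ ≤ Real.pi / 2) :
    ‖cR r (Lplus r φ p) - cR r p‖ = 4 * r * Real.sin (φ / 2) ∧
    ‖cR r (Lplus r φ p) - cR r p‖ ≤ 2 * Real.sqrt 2 * r ∧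
    (‖cR r (Lplus r φ p) - cR r p‖ = 2 * Real.sqrt 2 * r ↔ φ = Real.pi / 2) := by
  have hpi := Real.pi_pos
  have hs0 : 0 ≤ Real.sin (φ / 2) :=
    Real.sin_nonneg_of_nonneg_of_le_pi (by linarith) (by linarith)
  have hnorm : ‖cR r (Lplus r φ p) - cR r p‖ = 4 * r * Real.sin (φ / 2) := by
    rw [← sq_eq_sq₀ (norm_nonneg _) (by positivity), Complex.sq_norm, Complex.normSq_apply]
    simp only [cR, Lplus, Complex.sub_re, Complex.sub_im]
    have hθ := Real.sin_sq_add_cos_sq p.θ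
    have hφ := Real.sin_sq_add_cos_sq φ
    have hhalf : Real.cos φ = 1 - 2 * Real.sin (φ / 2) ^ 2 := by
      have h := Real.cos_two_mul' (φ / 2)
      rw [mul_div_cancel₀ φ two_ne_zero] at h
      linarith [Real.sin_sq_add_cos_sq (φ / 2)]
    rw [Real.sin_add, Real.cos_add]
    -- The squared length is `4 r² ((sin² θ + cos² θ) (sin² φ + (1 - cos φ)²))`.
    linear_combination
      4 * r ^ 2 * (Real.sin φ ^ 2 + (1 - Real.cos φ) ^ 2) * hθ + 4 * r ^ 2 * hφ
        - 8 * r ^ 2 * hhalf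
  have hmax : 2 * Real.sqrt 2 * r = 4 * r * Real.sin (Real.pi / 4) := by
    rw [Real.sin_pi_div_four]; ring
  have hφm : φ / 2 ∈ Set.Icc (-(Real.pi / 2)) (Real.pi / 2) := ⟨by linarith, by linarith⟩
  have hπm : Real.pi / 4 ∈ Set.Icc (-(Real.pi / 2)) (Real.pi / 2) :=
    ⟨by linarith, by linarith⟩
  have hr4 : 0 < 4 * r := by positivity
  rw [hnorm, hmax]
  refine ⟨rfl, ?_, ?_⟩
  · exact mul_le_mul_of_nonneg_left
      (Real.strictMonoOn_sin.monotoneOn hφm hπm (by linarith)) hr4.le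
  · rw [mul_right_inj' hr4.ne', Real.injOn_sin.eq_iff hφm hπm]
    constructor <;> intro h <;> linarith
end

section
/- For every pose p and every φ with 0 ≤ φ ≤ π/2, the left-hand circle center displaced by a forward right turn of central angle φ satisfies ‖c_L(R⁺_φ(p)) − c_L(p)‖ = 4r sin(φ/2), and hence ‖c_L(R⁺_φ(p)) − c_L(p)‖ ≤ 2√2 r, with equality if and only if φ = π/2. -/
/-!
The LHC center of a pose and its RHC center lie opposite each other, at distance `2 * r`, across the
position of the pose. A forward right turn fixes the RHC center, so it carries the LHC center along
a circle of radius `2 * r` through the central angle `φ`; the displacement is a chord, of length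
`2 * (2 * r) * sin (φ / 2)`. In coordinates this is the half-angle identity
`(sin (θ - φ) - sin θ) ^ 2 + (cos (θ - φ) - cos θ) ^ 2 = 4 * sin (φ / 2) ^ 2`. The bound and its
equality case follow because `sin` is strictly increasing on `[0, π / 4]`, where `φ / 2` lies, and
`sin (π / 4) = √2 / 2`.
-/

open Real

theorem LHC_displacement_under_right_turn (r : ℝ) (hr : 0 < r) (p : Pose) (φ : ℝ)
    (hφ₀ : 0 ≤ φ) (hφ₁ : φ ≤ Real.pi / 2) :
    ‖cL r (Rplus r φ p) - cL r p‖ = 4 * r * Real.sin (φ / 2) ∧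
    ‖cL r (Rplus r φ p) - cL r p‖ ≤ 2 * Real.sqrt 2 * r ∧
    (‖cL r (Rplus r φ p) - cL r p‖ = 2 * Real.sqrt 2 * r ↔ φ = Real.pi / 2) := by
  have hs : 0 ≤ Real.sin (φ / 2) :=
    Real.sin_nonneg_of_nonneg_of_le_pi (by linarith) (by linarith [Real.pi_pos])
  have hchord : (Real.sin (p.θ - φ) - Real.sin p.θ) ^ 2 + (Real.cos (p.θ - φ) - Real.cos p.θ) ^ 2
      = 4 * Real.sin (φ / 2) ^ 2 := by
    rw [Real.sin_sub_sin, Real.cos_sub_cos, show (p.θ - φ - p.θ) / 2 = -(φ / 2) by ring,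
      Real.sin_neg]
    linear_combination
      4 * Real.sin (φ / 2) ^ 2 * Real.sin_sq_add_cos_sq ((p.θ - φ + p.θ) / 2)
  have hnorm : ‖cL r (Rplus r φ p) - cL r p‖ = 4 * r * Real.sin (φ / 2) := by
    rw [← sq_eq_sq₀ (norm_nonneg _) (by positivity), Complex.sq_norm, Complex.normSq_apply]
    simp only [cL, Rplus, Complex.sub_re, Complex.sub_im]
    linear_combination 4 * r ^ 2 * hchord
  have hmax : 2 * Real.sqrt 2 * r = 4 * r * Real.sin (Real.pi / 4) := by
    rw [Real.sin_pi_div_four]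
    ring
  have hφ : φ / 2 ∈ Set.Icc (-(Real.pi / 2)) (Real.pi / 2) := by
    constructor <;> linarith [Real.pi_pos]
  have hπ : Real.pi / 4 ∈ Set.Icc (-(Real.pi / 2)) (Real.pi / 2) := by
    constructor <;> linarith [Real.pi_pos]
  refine ⟨hnorm, ?_, ?_⟩
  · rw [hnorm, hmax]
    exact mul_le_mul_of_nonneg_left
      ((Real.strictMonoOn_sin.le_iff_le hφ hπ).2 (by linarith)) (by positivity)
  · rw [hnorm, hmax, mul_right_inj' (by positivity), Real.strictMonoOn_sin.injOn.eq_iff hφ hπ]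
    constructor <;> intro h <;> linarith
end

section
/- Let p₀ = (0, 0, 0), r > 0, and let q = L⁺_V(S⁺_U(L⁺_T(p₀))) with 0 < T ≤ π/2, U > 0, and 0 < V ≤ π/2 (a path of type P₂ = l⁺_T s⁺_U l⁺_V with nonzero final arc). Let θ_f = T + V be the heading of q and let ∠L_fL₀ = atan2(c_L(q)_y − c_L(p₀)_y, c_L(q)_x − c_L(p₀)_x). Then θ_f > ∠L_fL₀; in fact ∠L_fL₀ = T. -/
/-!
A left turn rotates the pose about its own left-hand circle center, so it leaves that center
fixed (`cL_Lplus`), while a straight motion of length `U` translates it by `U` along the current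
heading (`cL_Splus`). Hence the center of
the path `L⁺_T S⁺_U L⁺_V` moves only during the straight segment, whose heading is `T`: the
displacement is `U (cos T + i sin T)` with `U > 0` and `T ∈ (-π, π]`, so its argument is exactly
`T`, and `T < T + V`.
-/

open Real

theorem cL_Lplus (r φ : ℝ) (p : Pose) : cL r (Lplus r φ p) = cL r p := by
  apply Complex.ext <;> simp only [cL, Lplus] <;> ring

theorem cL_Splus (r u : ℝ) (p : Pose) :
    cL r (Splus u p) = cL r p + u * (Complex.cos p.θ + Complex.sin p.θ * Complex.I) := by
  rw [← Complex.ofReal_cos, ← Complex.ofReal_sin]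
  apply Complex.ext <;> simp [cL, Splus, -Complex.ofReal_cos, -Complex.ofReal_sin] <;> ring

theorem P2_heading_exceeds_LfL0_angle (r : ℝ) (hr : 0 < r) (T U V : ℝ)
    (hT₀ : 0 < T) (hT₁ : T ≤ Real.pi / 2) (hU : 0 < U) (hV₀ : 0 < V) (hV₁ : V ≤ Real.pi / 2) :
    T + V > Complex.arg (cL r (Lplus r V (Splus U (Lplus r T ⟨0, 0, 0⟩))) - cL r ⟨0, 0, 0⟩) ∧
    Complex.arg (cL r (Lplus r V (Splus U (Lplus r T ⟨0, 0, 0⟩))) - cL r ⟨0, 0, 0⟩) = T := by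
  have hθ : (Lplus r T ⟨0, 0, 0⟩).θ = T := zero_add T
  have harg : Complex.arg
      (cL r (Lplus r V (Splus U (Lplus r T ⟨0, 0, 0⟩))) - cL r ⟨0, 0, 0⟩) = T := by
    rw [cL_Lplus, cL_Splus, cL_Lplus, hθ, add_sub_cancel_left]
    exact Complex.arg_mul_cos_add_sin_mul_I hU
      ⟨by linarith [Real.pi_pos], by linarith [Real.pi_pos]⟩
  exact ⟨by rw [harg]; linarith, harg⟩
end

section
/- Let p₀ = (0, 0, 0), r > 0, and let q = R⁻_V(L⁺_{π/2}(S⁺_U(L⁺_T(p₀)))) with 0 < T ≤ π/2, U ≥ 0, and 0 < V ≤ π/2 (a path of type P₃ = l⁺_T s⁺_U l⁺_{π/2} r⁻_V with nonzero final arc). Then c_L(q) ≠ c_L(p₀), and with θ_f = T + π/2 + V the unwrapped final heading of q and ∠L_fL₀ = atan2(c_L(q)_y − c_L(p₀)_y, c_L(q)_x − c_L(p₀)_x), one has θ_f > ∠L_fL₀ + π/2. -/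
/-!
Left turns fix the left circle center, the straight segment translates it by `U` in direction
`exp (I T)`, and the final backward right turn rotates it about the right circle center. The
displacement of the left circle center therefore equals `exp (I T) * w` with
`w = U + 2 r (1 - exp (I V))` (`cL_displacement`). Since `Im w = -2 r sin V < 0`, `w ≠ 0` and
`arg w ∈ (-π, 0)`, so the argument of the displacement is `T + arg w < T < T + V`.
-/

open Real

/-- Displacement of the left circle center along the path, in the frame whose real axis is the
direction of the straight segment, i.e. `U + 2 r (1 - exp (I V))`. -/
noncomputable def frameDisplacement (r U V : ℝ) : ℂ :=
  ⟨U + 2 * r * (1 - Real.cos V), -(2 * r * Real.sin V)⟩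

lemma cL_displacement (r T U V : ℝ) :
    cL r (Rminus r V (Lplus r (Real.pi / 2) (Splus U (Lplus r T ⟨0, 0, 0⟩)))) - cL r ⟨0, 0, 0⟩ =
      Complex.exp (T * Complex.I) * frameDisplacement r U V := by
  have hs : Real.sin (T + Real.pi / 2 + V) = Real.cos (T + V) := by
    rw [add_right_comm, Real.sin_add_pi_div_two]
  have hc : Real.cos (T + Real.pi / 2 + V) = -Real.sin (T + V) := by
    rw [add_right_comm, Real.cos_add_pi_div_two]
  apply Complex.ext
  · simp only [cL, Rminus, Lplus, Splus, frameDisplacement, zero_add, Complex.sub_re,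
      Complex.mul_re, Complex.exp_ofReal_mul_I_re, Complex.exp_ofReal_mul_I_im, hs,
      Real.sin_add_pi_div_two, Real.cos_add, Real.sin_zero]
    ring
  · simp only [cL, Rminus, Lplus, Splus, frameDisplacement, zero_add, Complex.sub_im,
      Complex.mul_im, Complex.exp_ofReal_mul_I_re, Complex.exp_ofReal_mul_I_im, hc,
      Real.cos_add_pi_div_two, Real.sin_add, Real.cos_zero]
    ring

theorem P3_heading_exceeds_LfL0_angle_plus_half_pi (r : ℝ) (hr : 0 < r) (T U V : ℝ)
    (hT₀ : 0 < T) (hT₁ : T ≤ Real.pi / 2) (hU : 0 ≤ U) (hV₀ : 0 < V) (hV₁ : V ≤ Real.pi / 2) :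
    cL r (Rminus r V (Lplus r (Real.pi / 2) (Splus U (Lplus r T ⟨0, 0, 0⟩)))) ≠ cL r ⟨0, 0, 0⟩ ∧
    T + Real.pi / 2 + V >
      Complex.arg (cL r (Rminus r V (Lplus r (Real.pi / 2) (Splus U (Lplus r T ⟨0, 0, 0⟩)))) -
        cL r ⟨0, 0, 0⟩) + Real.pi / 2 := by
  have hsin : 0 < Real.sin V := Real.sin_pos_of_pos_of_lt_pi hV₀ (by linarith [Real.pi_pos])
  have him : (frameDisplacement r U V).im < 0 := by
    change -(2 * r * Real.sin V) < 0
    have : 0 < 2 * r * Real.sin V := by positivity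
    linarith
  have hw : frameDisplacement r U V ≠ 0 := by
    intro h
    rw [h] at him
    exact lt_irrefl _ him
  have harg : Complex.arg (frameDisplacement r U V) < 0 := Complex.arg_neg_iff.2 him
  have hexp : Complex.arg (Complex.exp (T * Complex.I)) = T := by
    rw [Complex.exp_mul_I]
    exact Complex.arg_cos_add_sin_mul_I ⟨by linarith [Real.pi_pos], by linarith [Real.pi_pos]⟩
  refine ⟨?_, ?_⟩
  · rw [← sub_ne_zero, cL_displacement]
    exact mul_ne_zero (Complex.exp_ne_zero _) hw
  -- The arguments add without wrapping, as `-π < arg w < T + arg w < T < π`.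
  · rw [cL_displacement, Complex.arg_mul (Complex.exp_ne_zero _) hw, hexp]
    · linarith
    · rw [hexp]
      exact ⟨by linarith [Complex.neg_pi_lt_arg (frameDisplacement r U V)],
        by linarith [Real.pi_pos]⟩
end

section
/- Let p₀ = (0, 0, 0), r > 0, and let q = R⁺_V(S⁺_U(L⁺_T(p₀))) with 0 < T ≤ π/2, U ≥ 0, and 0 < V ≤ π/2 (a path of type P₁ = l⁺_T s⁺_U r⁺_V with nonzero final arc). Then c_L(q) ≠ c_L(p₀), and with θ_f = T − V the final heading of q and ∠L_fL₀ = atan2(c_L(q)_y − c_L(p₀)_y, c_L(q)_x − c_L(p₀)_x), one has θ_f < |∠L_fL₀|. -/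
/-!
Rotating the displacement `c_L(q) - c_L(p₀)` by the final heading `T - V` backwards gives
`w = (U cos V + 2 r sin V) + i (U sin V + 2 r (1 - cos V))` (`cL_sub_eq_mul`). Both coordinates
are positive for `0 < V ≤ π / 2`, so `0 < arg w < π / 2`. Since `-π / 2 < T - V < π / 2`, the
argument of the displacement is exactly `(T - V) + arg w`, without wrap-around, and hence exceeds
`T - V`.
-/

open Real

/-- The displacement of the left-hand circle centers, seen in the frame of the final heading. -/
noncomputable def rotatedDisplacement (r U V : ℝ) : ℂ :=
  ⟨U * Real.cos V + 2 * r * Real.sin V, U * Real.sin V + 2 * r * (1 - Real.cos V)⟩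

lemma cL_sub_eq_mul (r T U V : ℝ) :
    cL r (Rplus r V (Splus U (Lplus r T ⟨0, 0, 0⟩))) - cL r ⟨0, 0, 0⟩ =
      (Complex.cos ((T - V : ℝ) : ℂ) + Complex.sin ((T - V : ℝ) : ℂ) * Complex.I) *
        rotatedDisplacement r U V := by
  rw [← Complex.ofReal_cos, ← Complex.ofReal_sin]
  -- Expanding `T = (T - V) + V` leaves a polynomial identity in sines and cosines.
  obtain ⟨φ, rfl⟩ : ∃ φ, T = φ + V := ⟨T - V, by ring⟩
  apply Complex.ext
  · simp [-Complex.ofReal_cos, -Complex.ofReal_sin, cL, Rplus, Splus, Lplus, rotatedDisplacement, Real.sin_add, Real.cos_add]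
    ring
  · simp [-Complex.ofReal_cos, -Complex.ofReal_sin, cL, Rplus, Splus, Lplus, rotatedDisplacement, Real.sin_add, Real.cos_add]
    ring

theorem P1_heading_below_abs_LfL0_angle (r : ℝ) (hr : 0 < r) (T U V : ℝ)
    (hT₀ : 0 < T) (hT₁ : T ≤ Real.pi / 2) (hU : 0 ≤ U) (hV₀ : 0 < V) (hV₁ : V ≤ Real.pi / 2) :
    cL r (Rplus r V (Splus U (Lplus r T ⟨0, 0, 0⟩))) ≠ cL r ⟨0, 0, 0⟩ ∧
    T - V <
      |Complex.arg (cL r (Rplus r V (Splus U (Lplus r T ⟨0, 0, 0⟩))) - cL r ⟨0, 0, 0⟩)| := by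
  have hπ := Real.pi_pos
  have hsin : 0 < Real.sin V := Real.sin_pos_of_pos_of_lt_pi hV₀ (by linarith)
  have hcos : 0 ≤ Real.cos V := Real.cos_nonneg_of_mem_Icc ⟨by linarith, hV₁⟩
  have hcos1 : 0 < 1 - Real.cos V := by nlinarith [Real.sin_sq_add_cos_sq V]
  set w := rotatedDisplacement r U V with hw
  have hre : 0 < w.re := by
    change 0 < U * Real.cos V + 2 * r * Real.sin V
    positivity
  have him : 0 < w.im := by
    change 0 < U * Real.sin V + 2 * r * (1 - Real.cos V)
    positivity
  have hw0 : w ≠ 0 := fun h => by simp [h] at hre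
  have hφ : T - V ∈ Set.Ioc (-Real.pi) Real.pi := ⟨by linarith, by linarith⟩
  set e := Complex.cos ((T - V : ℝ) : ℂ) + Complex.sin ((T - V : ℝ) : ℂ) * Complex.I with he
  have hargE : e.arg = T - V := Complex.arg_cos_add_sin_mul_I hφ
  have he0 : e ≠ 0 := by
    rw [he, ← Complex.exp_mul_I]
    exact Complex.exp_ne_zero _
  have hdisp := cL_sub_eq_mul r T U V
  rw [← hw, ← he] at hdisp
  refine ⟨fun h => mul_ne_zero he0 hw0 (by rw [← hdisp, h, sub_self]), ?_⟩
  have h0 : 0 < w.arg := by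
    refine lt_of_le_of_ne (Complex.arg_nonneg_iff.2 him.le) fun h => ?_
    exact him.ne' (Complex.arg_eq_zero_iff.1 h.symm).2
  have h1 : w.arg < Real.pi / 2 := Complex.arg_lt_pi_div_two_iff.2 (Or.inl hre)
  rw [hdisp, Complex.arg_mul he0 hw0 (by rw [hargE]; exact ⟨by linarith, by linarith⟩), hargE]
  exact lt_of_lt_of_le (by linarith) (le_abs_self _)
end

section
/- Let p₀ = (0, 0, 0), r > 0, and let q = L⁻_V(R⁺_{π/2}(S⁺_U(L⁺_T(p₀)))) with 0 ≤ T ≤ π/2, U ≥ 0, and 0 < V ≤ π/2 (a path of type P₄ = l⁺_T s⁺_U r⁺_{π/2} l⁻_V with nonzero final arc). Let (x_f, y_f) be the position of q and θ_f = T − π/2 − V its unwrapped final heading. Define t₁ = (c_L(p₀) − (x_f, y_f)) · (cos θ_f, sin θ_f) (the signed distance, along the oriented line through (x_f, y_f) with direction θ_f, from the orthogonal projection of c_L(p₀) onto that line to (x_f, y_f)) and ∠R_fL₀ = atan2(c_R(q)_y − c_L(p₀)_y, c_R(q)_x − c_L(p₀)_x). Then t₁ > −2r and ∠R_fL₀ >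 θ_f. -/
/-!
Everything is read in the frame attached to the final heading `θ = T - π/2 - V`. Writing the planar
vectors as complex numbers, `c_R(q) - c_L(p₀) = w e^{iθ}` with
`w = (2r cos V - (U + 2r) sin V) + i ((U + 2r) cos V + 2r sin V - 2r)` (`cR_sub_cL_eq`), and the signed
distance `t₁` is `-Re w`, since `q` lies on the line through `c_R(q)` perpendicular to its heading.

For `0 < V ≤ π/2`, `t₁ = (U + 2r) sin V - 2r cos V > -2r` because `sin V > 0` and `cos V ≤ 1`. Also
`arg w > 0`: the imaginary part of `w` is positive for `V < π/2`, and for `V = π/2` the number `w` is a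
negative real, of argument `π` (`frameVec_arg_pos`). As `θ ∈ [-π, 0)`, the sum `θ + arg w` stays in
`(-π, π]`, so it is the principal argument of `w e^{iθ}` and it exceeds `θ`.
-/

open Real

/-- The vector from `c_L(p₀)` to `c_R(q)`, expressed in the frame whose first axis is the final
heading of `q`. -/
noncomputable def frameVec (r U V : ℝ) : ℂ :=
  ⟨2 * r * Real.cos V - (U + 2 * r) * Real.sin V,
   (U + 2 * r) * Real.cos V + 2 * r * Real.sin V - 2 * r⟩

theorem cos_heading (T V : ℝ) : Real.cos (T - Real.pi / 2 - V) =
    Real.sin T * Real.cos V - Real.cos T * Real.sin V := by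
  rw [Real.cos_sub, Real.cos_sub_pi_div_two, Real.sin_sub_pi_div_two]; ring

theorem sin_heading (T V : ℝ) : Real.sin (T - Real.pi / 2 - V) =
    -(Real.cos T * Real.cos V) - Real.sin T * Real.sin V := by
  rw [Real.sin_sub, Real.cos_sub_pi_div_two, Real.sin_sub_pi_div_two]; ring

theorem cR_sub_cL_eq (r T U V : ℝ) :
    cR r (Lminus r V (Rplus r (Real.pi / 2) (Splus U (Lplus r T ⟨0, 0, 0⟩)))) - cL r ⟨0, 0, 0⟩ =
      frameVec r U V * Complex.exp ((T - Real.pi / 2 - V : ℝ) * Complex.I) := by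
  have hV := Real.sin_sq_add_cos_sq V
  apply Complex.ext
  · simp only [cR, cL, Lminus, Rplus, Splus, Lplus, frameVec, Complex.sub_re, Complex.mul_re,
      Complex.exp_ofReal_mul_I_re, Complex.exp_ofReal_mul_I_im, zero_add, cos_heading, sin_heading,
      Real.cos_sub_pi_div_two, Real.sin_sub_pi_div_two, Real.sin_zero, Real.cos_zero]
    linear_combination (-(U + 2 * r) * Real.cos T - 2 * r * Real.sin T) * hV
  · simp only [cR, cL, Lminus, Rplus, Splus, Lplus, frameVec, Complex.sub_im, Complex.mul_im,
      Complex.exp_ofReal_mul_I_re, Complex.exp_ofReal_mul_I_im, zero_add, cos_heading, sin_heading,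
      Real.cos_sub_pi_div_two, Real.sin_sub_pi_div_two, Real.sin_zero, Real.cos_zero]
    linear_combination (-(U + 2 * r) * Real.sin T + 2 * r * Real.cos T) * hV

/-- At `V = π/2` the vector lies on the negative real axis, where the convention `arg = π` keeps the
argument positive. -/
theorem frameVec_arg_pos {r U V : ℝ} (hr : 0 < r) (hU : 0 ≤ U) (hV₀ : 0 < V)
    (hV₁ : V ≤ Real.pi / 2) : 0 < Complex.arg (frameVec r U V) := by
  rcases hV₁.lt_or_eq with h | rfl
  · have hs : 0 < Real.sin V := Real.sin_pos_of_pos_of_lt_pi hV₀ (by linarith [Real.pi_pos])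
    have hc : 0 < Real.cos V := Real.cos_pos_of_mem_Ioo ⟨by linarith [Real.pi_pos], h⟩
    -- `(cos V + sin V)² = 1 + 2 sin V cos V > 1`
    have hsc : 1 < Real.cos V + Real.sin V := by
      nlinarith [Real.sin_sq_add_cos_sq V, mul_pos hs hc]
    have him : 0 < (frameVec r U V).im := by
      simp only [frameVec]
      nlinarith [mul_nonneg hU hc.le, mul_pos hr (sub_pos.2 hsc)]
    refine lt_of_le_of_ne (Complex.arg_nonneg_iff.2 him.le) fun h0 => ?_
    exact him.ne' (Complex.arg_eq_zero_iff.1 h0.symm).2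
  · have : Complex.arg (frameVec r U (Real.pi / 2)) = Real.pi := by
      rw [Complex.arg_eq_pi_iff]
      simp only [frameVec, Real.cos_pi_div_two, Real.sin_pi_div_two]
      constructor <;> linarith
    rw [this]; exact Real.pi_pos

theorem P4_signed_distance_and_RfL0_angle (r : ℝ) (hr : 0 < r) (T U V : ℝ)
    (hT₀ : 0 ≤ T) (hT₁ : T ≤ Real.pi / 2) (hU : 0 ≤ U) (hV₀ : 0 < V) (hV₁ : V ≤ Real.pi / 2) :
    (cL r ⟨0, 0, 0⟩ - pos (Lminus r V (Rplus r (Real.pi / 2) (Splus U (Lplus r T ⟨0, 0, 0⟩))))).re * Real.cos (T - Real.pi / 2 - V) +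
      (cL r ⟨0, 0, 0⟩ - pos (Lminus r V (Rplus r (Real.pi / 2) (Splus U (Lplus r T ⟨0, 0, 0⟩))))).im * Real.sin (T - Real.pi / 2 - V) > -(2 * r) ∧
    Complex.arg (cR r (Lminus r V (Rplus r (Real.pi / 2) (Splus U (Lplus r T ⟨0, 0, 0⟩)))) - cL r ⟨0, 0, 0⟩) > T - Real.pi / 2 - V := by
  constructor
  · have hs : 0 < Real.sin V := Real.sin_pos_of_pos_of_lt_pi hV₀ (by linarith [Real.pi_pos])
    have hT := Real.sin_sq_add_cos_sq T
    have key : ∀ z : ℂ, z = cL r ⟨0, 0, 0⟩ -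
          pos (Lminus r V (Rplus r (Real.pi / 2) (Splus U (Lplus r T ⟨0, 0, 0⟩)))) →
        z.re * Real.cos (T - Real.pi / 2 - V) + z.im * Real.sin (T - Real.pi / 2 - V) =
          (U + 2 * r) * Real.sin V - 2 * r * Real.cos V := by
      rintro z rfl
      simp only [cL, pos, Lminus, Rplus, Splus, Lplus, Complex.sub_re, Complex.sub_im, zero_add,
        cos_heading, sin_heading, Real.cos_sub_pi_div_two, Real.sin_sub_pi_div_two,
        Real.sin_zero, Real.cos_zero]
      linear_combination ((U + 2 * r) * Real.sin V - 2 * r * Real.cos V) * hT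
    rw [key _ rfl]
    nlinarith [Real.cos_le_one V, mul_pos hr hs, mul_nonneg hU hs.le]
  · have hpos := frameVec_arg_pos hr hU hV₀ hV₁
    have hle := Complex.arg_le_pi (frameVec r U V)
    have hne : frameVec r U V ≠ 0 := by
      intro h
      rw [h, Complex.arg_zero] at hpos
      exact hpos.false
    have hpolar : frameVec r U V * Complex.exp ((T - Real.pi / 2 - V : ℝ) * Complex.I) =
        (‖frameVec r U V‖ : ℂ) * Complex.exp
          ((Complex.arg (frameVec r U V) + (T - Real.pi / 2 - V) : ℝ) * Complex.I) := by
      conv_lhs => rw [← Complex.norm_mul_exp_arg_mul_I (frameVec r U V)]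
      rw [mul_assoc, ← Complex.exp_add, Complex.ofReal_add, add_mul]
    -- The total angle lies in `(-π, π]`: the heading is in `[-π, 0)` and `arg w` in `(0, π]`.
    rw [cR_sub_cL_eq, hpolar, Complex.arg_real_mul _ (norm_pos_iff.2 hne), Complex.arg_exp_mul_I,
      (toIocMod_eq_self _).2 ⟨by linarith, by linarith⟩]
    linarith
end

section
/- Let p₀ = (0, 0, 0), r > 0, and let q = R⁻_V(L⁺_{π/2}(S⁺_U(R⁺_T(p₀)))) with 0 ≤ T ≤ π/2, U ≥ 0, and 0 < V < π/2 (a path of type P₈ = r⁺_T s⁺_U l⁺_{π/2} r⁻_V with nonzero final arc). Let (x_f, y_f) be the position of q and θ_f = −T + π/2 + V its unwrapped final heading. Define t₂ = (c_R(p₀) − (x_f, y_f)) · (cos θ_f, sin θ_f) (the signed distance, along the oriented line through (x_f, y_f) with direction θ_f, from the orthogonal projection of c_R(p₀) onto that line to (x_f, y_f)) and d₁ = |(c_R(p₀) − (x_f, y_f)) · (−sin θ_f, cos θ_f)| (the distance from c_R(p₀) to that line). Then t₂ > −2r and d₁ > r. -/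
/-!
Work in the orthonormal frame `e = (cos T, -sin T)`, `n = (sin T, cos T)`, i.e. the heading and its
left normal after the first arc. Following the turning centers along the path, the last right-hand
circle has center `c_R(p₀) + (U + 2r) e + 2r n`, the final heading is `f = cos V n - sin V e`, and
the final position is that center plus `r f⊥` with `f⊥ = -cos V e - sin V n`. Taking inner products,
the signed distance is `(U + 2r) sin V - 2r cos V`, which exceeds `-2r` because `sin V > 0` and
`cos V ≤ 1`; the signed offset from the line is `(U + 2r) cos V + 2r sin V - r`, which exceeds `r`
because `cos V + sin V > 1` on `(0, π/2)`.
-/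

open Real

theorem P8_signed_distance_and_line_distance (r : ℝ) (hr : 0 < r) (T U V : ℝ)
    (hT₀ : 0 ≤ T) (hT₁ : T ≤ Real.pi / 2) (hU : 0 ≤ U) (hV₀ : 0 < V) (hV₁ : V < Real.pi / 2) :
    (cR r ⟨0, 0, 0⟩ - pos (Rminus r V (Lplus r (Real.pi / 2) (Splus U (Rplus r T ⟨0, 0, 0⟩))))).re * Real.cos (-T + Real.pi / 2 + V) +
      (cR r ⟨0, 0, 0⟩ - pos (Rminus r V (Lplus r (Real.pi / 2) (Splus U (Rplus r T ⟨0, 0, 0⟩))))).im * Real.sin (-T + Real.pi / 2 + V) > -(2 * r) ∧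
    |(cR r ⟨0, 0, 0⟩ - pos (Rminus r V (Lplus r (Real.pi / 2) (Splus U (Rplus r T ⟨0, 0, 0⟩))))).re * (-Real.sin (-T + Real.pi / 2 + V)) +
      (cR r ⟨0, 0, 0⟩ - pos (Rminus r V (Lplus r (Real.pi / 2) (Splus U (Rplus r T ⟨0, 0, 0⟩))))).im * Real.cos (-T + Real.pi / 2 + V)| > r := by
  
  have hS : 0 < Real.sin V := Real.sin_pos_of_pos_of_lt_pi hV₀ (by linarith)
  have hC : 0 < Real.cos V := Real.cos_pos_of_mem_Ioo ⟨by linarith, hV₁⟩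
  have hC1 : Real.cos V ≤ 1 := Real.cos_le_one V
  have h := Real.sin_sq_add_cos_sq T
  have k := Real.sin_sq_add_cos_sq V
  have hs : Real.sin (-T + Real.pi / 2 + V)
      = Real.cos V * Real.cos T + Real.sin V * Real.sin T := by
    rw [← Real.cos_sub, ← Real.sin_add_pi_div_two]; congr 1; ring
  have hc : Real.cos (-T + Real.pi / 2 + V)
      = -(Real.sin V * Real.cos T - Real.cos V * Real.sin T) := by
    rw [← Real.sin_sub, ← Real.cos_add_pi_div_two]; congr 1; ring
  -- The formulas for both quantities in the rotated frame.
  have e1 : (cR r ⟨0, 0, 0⟩ - pos (Rminus r V (Lplus r (Real.pi / 2)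
        (Splus U (Rplus r T ⟨0, 0, 0⟩))))).re * Real.cos (-T + Real.pi / 2 + V) +
      (cR r ⟨0, 0, 0⟩ - pos (Rminus r V (Lplus r (Real.pi / 2)
        (Splus U (Rplus r T ⟨0, 0, 0⟩))))).im * Real.sin (-T + Real.pi / 2 + V)
      = (U + 2 * r) * Real.sin V - 2 * r * Real.cos V := by
    simp only [cR, pos, Rminus, Lplus, Splus, Rplus, Complex.sub_re, Complex.sub_im, zero_sub,
      hs, hc, Real.sin_add_pi_div_two, Real.cos_add_pi_div_two, Real.sin_neg, Real.cos_neg,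
      Real.sin_zero, Real.cos_zero]
    linear_combination ((U + 2 * r) * Real.sin V - 2 * r * Real.cos V) * h
  have e2 : (cR r ⟨0, 0, 0⟩ - pos (Rminus r V (Lplus r (Real.pi / 2)
        (Splus U (Rplus r T ⟨0, 0, 0⟩))))).re * (-Real.sin (-T + Real.pi / 2 + V)) +
      (cR r ⟨0, 0, 0⟩ - pos (Rminus r V (Lplus r (Real.pi / 2)
        (Splus U (Rplus r T ⟨0, 0, 0⟩))))).im * Real.cos (-T + Real.pi / 2 + V)
      = (U + 2 * r) * Real.cos V + 2 * r * Real.sin V - r := by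
    simp only [cR, pos, Rminus, Lplus, Splus, Rplus, Complex.sub_re, Complex.sub_im, zero_sub,
      hs, hc, Real.sin_add_pi_div_two, Real.cos_add_pi_div_two, Real.sin_neg, Real.cos_neg,
      Real.sin_zero, Real.cos_zero]
    linear_combination ((U + 2 * r) * Real.cos V + 2 * r * Real.sin V
      - r * (Real.sin V ^ 2 + Real.cos V ^ 2)) * h - r * k
  rw [e1, e2]
  -- Since `(cos V + sin V)² = 1 + 2 sin V cos V > 1`.
  have hCS : 1 < Real.cos V + Real.sin V := by nlinarith [mul_pos hS hC]
  constructor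
  · nlinarith [mul_nonneg hU hS.le, mul_pos hr hS, mul_nonneg hr.le (sub_nonneg.2 hC1)]
  · refine lt_of_lt_of_le ?_ (le_abs_self _)
    nlinarith [mul_nonneg hU hC.le, mul_pos hr (sub_pos.2 hCS)]
end

section
/- Let p₀ = (0, 0, 0), r > 0, and let q = L⁻_V(S⁻_U(L⁻_{π/2}(R⁺_T(p₀)))) with 0 ≤ T ≤ π/2, U ≥ 0, and 0 < V ≤ π/2 (a path of type P₆ = r⁺_T l⁻_{π/2} s⁻_U l⁻_V with nonzero final arc). Then c_R(p₀) ≠ c_L(q), and with θ_f = −T − π/2 − V the unwrapped final heading of q and ∠R₀L_f = atan2(c_R(p₀)_y − c_L(q)_y, c_R(p₀)_x − c_L(q)_x), one has θ_f < ∠R₀L_f. -/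
/-!
The initial right turn about `c_R(p₀)` leaves the left-hand circle centre at distance `2r` from
`c_R(p₀)`, in the direction `(sin T, cos T)`. Left turns fix that centre, and after the
quarter turn the heading is `-T - π/2`, so backing up by `U` moves it by `U (sin T, cos T)`.
Hence the vector from `c_L(q)` to `c_R(p₀)` has length `2r + U > 0` and polar angle `-T - π/2`
(`center_diff`). For `T < π/2` this angle is the principal argument; for `T = π/2` it is `-π`,
which is below every principal argument. Subtracting `V > 0` makes the inequality strict.
-/

open Real

/-- A backward left turn moves a pose along its left-hand circle, so the centre is unchanged. -/
theorem cL_Lminus (r φ : ℝ) (p : Pose) : cL r (Lminus r φ p) = cL r p := by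
  apply Complex.ext <;> simp only [cL, Lminus] <;> ring

theorem center_diff (r T U V : ℝ) :
    cR r ⟨0, 0, 0⟩ - cL r (Lminus r V (Sminus U (Lminus r (Real.pi / 2) (Rplus r T ⟨0, 0, 0⟩)))) =
      ((2 * r + U : ℝ) : ℂ) * (Complex.cos ((-T - Real.pi / 2 : ℝ) : ℂ) +
        Complex.sin ((-T - Real.pi / 2 : ℝ) : ℂ) * Complex.I) := by
  rw [cL_Lminus, ← Complex.ofReal_cos, ← Complex.ofReal_sin]
  apply Complex.ext <;>
    simp [cL, cR, Lminus, Sminus, Rplus, Real.sin_sub, Real.cos_sub, Complex.sin_ofReal_re,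
      Complex.cos_ofReal_re] <;> ring

theorem P6_heading_below_R0Lf_angle (r : ℝ) (hr : 0 < r) (T U V : ℝ)
    (hT₀ : 0 ≤ T) (hT₁ : T ≤ Real.pi / 2) (hU : 0 ≤ U) (hV₀ : 0 < V) (hV₁ : V ≤ Real.pi / 2) :
    cR r ⟨0, 0, 0⟩ ≠ cL r (Lminus r V (Sminus U (Lminus r (Real.pi / 2) (Rplus r T ⟨0, 0, 0⟩)))) ∧
    -T - Real.pi / 2 - V <
      Complex.arg (cR r ⟨0, 0, 0⟩ -
        cL r (Lminus r V (Sminus U (Lminus r (Real.pi / 2) (Rplus r T ⟨0, 0, 0⟩))))) := by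
  have hd := center_diff r T U V
  have hpos : 0 < 2 * r + U := by linarith
  refine ⟨fun h => ?_, ?_⟩
  · rw [h, sub_self] at hd
    have hn := congrArg norm hd
    rw [norm_mul, Complex.norm_cos_add_sin_mul_I, Complex.norm_real, norm_zero, mul_one] at hn
    exact hpos.ne (hn.trans (Real.norm_of_nonneg hpos.le))
  · rcases hT₁.lt_or_eq with hT | hT
    · rw [hd, Complex.arg_mul_cos_add_sin_mul_I hpos ⟨by linarith, by linarith [Real.pi_pos]⟩]
      linarith
    · exact lt_trans (by linarith) (Complex.neg_pi_lt_arg _)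
end

section
/- Let p₀ = (0, 0, 0), r > 0, and let q = L⁺_V(S⁺_U(L⁺_{π/2}(R⁻_T(p₀)))) with 0 ≤ T ≤ π/2, U ≥ 0, and 0 < V ≤ π/2 (a path of type P₁₁ = r⁻_T l⁺_{π/2} s⁺_U l⁺_V with nonzero final arc). Then c_L(q) ≠ c_R(p₀), and with θ_f = T + π/2 + V the unwrapped final heading of q and ∠L_fR₀ = atan2(c_L(q)_y − c_R(p₀)_y, c_L(q)_x − c_R(p₀)_x), one has θ_f > ∠L_fR₀. -/
/-!
The backward right turn and the left turns fix the circle they run on, so only the right-hand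
centre of the start and the straight segment matter. After `R⁻_T` the two centres differ by
`2r` in the direction `T + π/2`. The quarter turn brings the heading to exactly `T + π/2`, so the
straight segment pushes the left-hand centre a further distance `U` along the same ray
(`cL_sub_cR_P11`). The centre displacement is therefore `(2r + U) e^{i(T + π/2)}`, which is nonzero
and, as `T + π/2 ∈ [π/2, π]` lies in the principal range, has argument exactly `T + π/2`. The
final heading exceeds this by `V > 0`.
-/

open Real

/-- The final left-hand centre lies at distance `2r + U` from the initial right-hand centre, in the
direction `T + π/2`; the last arc `V` does not move it. -/
theorem cL_sub_cR_P11 (r T U V : ℝ) :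
    cL r (Lplus r V (Splus U (Lplus r (Real.pi / 2) (Rminus r T ⟨0, 0, 0⟩)))) - cR r ⟨0, 0, 0⟩ =
      ((2 * r + U : ℝ) : ℂ) *
        (Complex.cos ((T + Real.pi / 2 : ℝ) : ℂ) +
          Complex.sin ((T + Real.pi / 2 : ℝ) : ℂ) * Complex.I) := by
  rw [← Complex.ofReal_cos, ← Complex.ofReal_sin]
  apply Complex.ext <;>
    simp [-Complex.ofReal_cos, -Complex.ofReal_sin, -Complex.ofReal_add, cL, cR, Lplus, Splus,
      Rminus, Real.sin_add_pi_div_two, Real.cos_add_pi_div_two] <;>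
    ring

theorem P11_heading_above_LfR0_angle (r : ℝ) (hr : 0 < r) (T U V : ℝ)
    (hT₀ : 0 ≤ T) (hT₁ : T ≤ Real.pi / 2) (hU : 0 ≤ U) (hV₀ : 0 < V) (hV₁ : V ≤ Real.pi / 2) :
    cL r (Lplus r V (Splus U (Lplus r (Real.pi / 2) (Rminus r T ⟨0, 0, 0⟩)))) ≠ cR r ⟨0, 0, 0⟩ ∧
    T + Real.pi / 2 + V >
      Complex.arg (cL r (Lplus r V (Splus U (Lplus r (Real.pi / 2) (Rminus r T ⟨0, 0, 0⟩)))) -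
        cR r ⟨0, 0, 0⟩) := by
  have hpos : 0 < 2 * r + U := by linarith
  have harg : Complex.arg
      (cL r (Lplus r V (Splus U (Lplus r (Real.pi / 2) (Rminus r T ⟨0, 0, 0⟩)))) -
        cR r ⟨0, 0, 0⟩) = T + Real.pi / 2 := by
    rw [cL_sub_cR_P11]
    exact Complex.arg_mul_cos_add_sin_mul_I hpos ⟨by linarith [Real.pi_pos], by linarith⟩
  refine ⟨fun h => ?_, by rw [harg]; linarith⟩
  -- Coinciding centres would have displacement `0`, of argument `0`, but `T + π/2 > 0`.
  rw [h, sub_self, Complex.arg_zero] at harg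
  linarith [Real.pi_pos]
end

section
/- Let p₀ = (0, 0, 0), r > 0, and let q = R⁺_V(S⁺_U(L⁺_{π/2}(R⁻_T(p₀)))) with 0 < T < π/2, U ≥ 0, and 0 ≤ V ≤ π/2 (a path of type P₁₀ = r⁻_T l⁺_{π/2} s⁺_U r⁺_V). Then the final right-hand circle center satisfies c_R(q)_x < 2r and c_R(q)_y > c_L(p₀)_y (note c_L(p₀)_y = r). -/
/-!
A right turn fixes its right-hand circle center, so `V` plays no role: the final center is that of
the pose reached before the last turn, namely
`(2r cos T - (2r + U) sin T, 2r (cos T + sin T) - r + U cos T)`.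
Both bounds then follow from `sin T > 0`, `cos T > 0` and `cos T + sin T > 1` on `(0, π/2)`.
-/

open Real

/-- A right turn keeps its own circle center fixed. -/
lemma cR_Rplus (r V : ℝ) (p : Pose) : cR r (Rplus r V p) = cR r p := by
  apply Complex.ext <;> simp only [cR, Rplus] <;> ring

theorem P10_final_RHC_center_constraints (r : ℝ) (hr : 0 < r) (T U V : ℝ)
    (hT₀ : 0 < T) (hT₁ : T < Real.pi / 2) (hU : 0 ≤ U) (hV₀ : 0 ≤ V) (hV₁ : V ≤ Real.pi / 2) :
    (cR r (Rplus r V (Splus U (Lplus r (Real.pi / 2) (Rminus r T ⟨0, 0, 0⟩))))).re < 2 * r ∧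
    (cR r (Rplus r V (Splus U (Lplus r (Real.pi / 2) (Rminus r T ⟨0, 0, 0⟩))))).im >
      (cL r ⟨0, 0, 0⟩).im := by
  have hs : 0 < Real.sin T := Real.sin_pos_of_pos_of_lt_pi hT₀ (by linarith)
  have hc : 0 < Real.cos T := Real.cos_pos_of_mem_Ioo ⟨by linarith, hT₁⟩
  have hsum : 1 < Real.cos T + Real.sin T := by
    nlinarith [Real.sin_sq_add_cos_sq T, mul_pos hs hc]
  rw [cR_Rplus]
  simp only [cR, cL, Splus, Lplus, Rminus, zero_add, Real.sin_zero, Real.cos_zero,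
    Real.sin_add_pi_div_two, Real.cos_add_pi_div_two]
  constructor
  · nlinarith [mul_pos hr hs, mul_nonneg hU hs.le,
      mul_le_mul_of_nonneg_left (Real.cos_le_one T) hr.le]
  · nlinarith [mul_nonneg hU hc.le, mul_lt_mul_of_pos_left hsum hr]
end

section
/- Let p₀ = (0, 0, 0), r > 0, and let q = L⁺_V(S⁺_U(L⁺_{π/2}(R⁻_T(p₀)))) with 0 < T ≤ π/2, U ≥ 0, and 0 ≤ V ≤ π/2 (a path of type P₁₁ = r⁻_T l⁺_{π/2} s⁺_U l⁺_V). Then the final left-hand circle center satisfies c_L(q)_x < 0; in fact c_L(q)_x = −(2r + U) sin T. -/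
/-! A left turn fixes the left-hand circle center, so only two motions move it: the initial
backward right turn, which puts it at abscissa `-2 r sin T`, and the straight segment, driven at
heading `T + π / 2`, which shifts its abscissa by `U cos (T + π / 2) = -U sin T`. The sum is
negative because `sin` is positive on `(0, π)`. -/

open Real

theorem re_cL_Splus (r u : ℝ) (p : Pose) :
    (cL r (Splus u p)).re = (cL r p).re + u * Real.cos p.θ := by
  simp only [cL, Splus]; ring

theorem re_cL_Rminus_zero (r T : ℝ) :
    (cL r (Rminus r T ⟨0, 0, 0⟩)).re = -(2 * r) * Real.sin T := by
  simp only [cL, Rminus, zero_add, Real.sin_zero]; ring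

theorem P11_final_LHC_center_x_negative (r : ℝ) (hr : 0 < r) (T U V : ℝ)
    (hT₀ : 0 < T) (hT₁ : T ≤ Real.pi / 2) (hU : 0 ≤ U) (hV₀ : 0 ≤ V) (hV₁ : V ≤ Real.pi / 2) :
    (cL r (Lplus r V (Splus U (Lplus r (Real.pi / 2) (Rminus r T ⟨0, 0, 0⟩))))).re < 0 ∧
    (cL r (Lplus r V (Splus U (Lplus r (Real.pi / 2) (Rminus r T ⟨0, 0, 0⟩))))).re =
      -(2 * r + U) * Real.sin T := by
  have key : (cL r (Lplus r V (Splus U (Lplus r (Real.pi / 2) (Rminus r T ⟨0, 0, 0⟩))))).re =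
      -(2 * r + U) * Real.sin T := by
    rw [cL_Lplus, re_cL_Splus, cL_Lplus, re_cL_Rminus_zero]
    simp only [Lplus, Rminus, zero_add, Real.cos_add_pi_div_two]
    ring
  have hs : 0 < Real.sin T := Real.sin_pos_of_pos_of_lt_pi hT₀ (by linarith [Real.pi_pos])
  refine ⟨?_, key⟩
  rw [key, neg_mul]
  exact neg_neg_of_pos (by positivity)
end

section
/- Let p₀ = (0, 0, 0), r > 0, and let q = L⁻_V(R⁺_{π/2}(S⁺_U(L⁺_T(p₀)))) with 0 ≤ T ≤ π/2, U ≥ 0, and 0 ≤ V ≤ π/2 (a path of type P₄ = l⁺_T s⁺_U r⁺_{π/2} l⁻_V). Then the final left-hand circle center satisfies c_L(q)_x ≥ 2r; in fact c_L(q)_x = U cos T + 2r(sin T + cos T). -/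
/-!
A left turn fixes the left-hand circle center, so the final turn of angle `V` does not affect it.
Before that turn the heading is `T - π / 2`, and adding up the displacements of the first three
segments gives the closed form. The bound follows since `sin T + cos T ≥ sin² T + cos² T = 1`
when both `sin T` and `cos T` lie in `[0, 1]`, and `U * cos T ≥ 0`.
-/

open Real

theorem P4_final_LHC_center_x_at_least_2r (r : ℝ) (hr : 0 < r) (T U V : ℝ)
    (hT₀ : 0 ≤ T) (hT₁ : T ≤ Real.pi / 2) (hU : 0 ≤ U) (hV₀ : 0 ≤ V) (hV₁ : V ≤ Real.pi / 2) :
    (cL r (Lminus r V (Rplus r (Real.pi / 2) (Splus U (Lplus r T ⟨0, 0, 0⟩))))).re ≥ 2 * r ∧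
    (cL r (Lminus r V (Rplus r (Real.pi / 2) (Splus U (Lplus r T ⟨0, 0, 0⟩))))).re =
      U * Real.cos T + 2 * r * (Real.sin T + Real.cos T) := by
  have key : (cL r (Lminus r V (Rplus r (Real.pi / 2) (Splus U (Lplus r T ⟨0, 0, 0⟩))))).re =
      U * Real.cos T + 2 * r * (Real.sin T + Real.cos T) := by
    simp only [cL, Lminus, Rplus, Splus, Lplus, zero_add, Real.sin_zero, Real.sin_sub_pi_div_two]
    ring
  refine ⟨?_, key⟩
  rw [key]
  have hs : 0 ≤ Real.sin T := Real.sin_nonneg_of_nonneg_of_le_pi hT₀ (by linarith [Real.pi_pos])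
  have hc : 0 ≤ Real.cos T := Real.cos_nonneg_of_neg_pi_div_two_le_of_le (by linarith) hT₁
  have h1 : 1 ≤ Real.sin T + Real.cos T := by
    nlinarith [Real.sin_sq_add_cos_sq T, Real.sin_le_one T, Real.cos_le_one T]
  nlinarith [mul_nonneg hU hc, mul_le_mul_of_nonneg_left h1 hr.le]
end

section
/- Let p₀ = (0, 0, 0), r > 0, and let q = L⁻_V(R⁺_{π/2}(S⁺_U(L⁺_{π/2}(R⁻_T(p₀))))) with 0 ≤ T ≤ π/2, U ≥ 0, and 0 ≤ V ≤ π/2 (a path of type P₉ = r⁻_T l⁺_{π/2} s⁺_U r⁺_{π/2} l⁻_V). Then the distance from the initial right-hand circle center to the final left-hand circle center satisfies ‖c_R(p₀) − c_L(q)‖ ≥ √20 · r, with equality when U = 0. -/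
/-! With `e = (cos T, sin T)` and `n = (-sin T, cos T)`, the displacement from the initial right-hand
circle center to the final left-hand one is `2 r e + (4 r + U) n`: each change of turning side moves
the active center by `2 r` along the current normal, the two quarter turns rotate that normal between
`n` and `-e`, and the straight segment runs along `n`. The outer arcs `T` and `V` fix their own
centers, so `T` enters only through the frame and `V` not at all. As `e ⊥ n`, the squared distance is
`4 r² + (4 r + U)²`, which is at least `20 r²`, with equality at `U = 0`. -/

open Real

/-- The center-to-center distance, by Pythagoras in the orthonormal frame of heading `T`. -/
lemma norm_cR_sub_cL_eq (r T U V : ℝ) :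
    ‖cR r ⟨0, 0, 0⟩ -
        cL r (Lminus r V (Rplus r (Real.pi / 2)
          (Splus U (Lplus r (Real.pi / 2) (Rminus r T ⟨0, 0, 0⟩)))))‖ =
      Real.sqrt (4 * r ^ 2 + (4 * r + U) ^ 2) := by
  have h : cR r ⟨0, 0, 0⟩ -
        cL r (Lminus r V (Rplus r (Real.pi / 2)
          (Splus U (Lplus r (Real.pi / 2) (Rminus r T ⟨0, 0, 0⟩))))) =
      ⟨(4 * r + U) * Real.sin T - 2 * r * Real.cos T,
        -((4 * r + U) * Real.cos T + 2 * r * Real.sin T)⟩ := by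
    apply Complex.ext <;>
      simp [cR, cL, Lminus, Rplus, Splus, Lplus, Rminus, Real.sin_add_pi_div_two,
        Real.cos_add_pi_div_two] <;> ring
  rw [h, Complex.norm_def, Complex.normSq_mk]
  congr 1
  linear_combination (4 * r ^ 2 + (4 * r + U) ^ 2) * Real.sin_sq_add_cos_sq T

theorem P9_RL_distance_at_least_sqrt20_r (r : ℝ) (hr : 0 < r) (T U V : ℝ)
    (hT₀ : 0 ≤ T) (hT₁ : T ≤ Real.pi / 2) (hU : 0 ≤ U) (hV₀ : 0 ≤ V) (hV₁ : V ≤ Real.pi / 2) :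
    ‖cR r ⟨0, 0, 0⟩ -
        cL r (Lminus r V (Rplus r (Real.pi / 2)
          (Splus U (Lplus r (Real.pi / 2) (Rminus r T ⟨0, 0, 0⟩)))))‖ ≥ Real.sqrt 20 * r ∧
    (U = 0 →
      ‖cR r ⟨0, 0, 0⟩ -
          cL r (Lminus r V (Rplus r (Real.pi / 2)
            (Splus U (Lplus r (Real.pi / 2) (Rminus r T ⟨0, 0, 0⟩)))))‖ = Real.sqrt 20 * r) := by
  have hs : Real.sqrt 20 * r = Real.sqrt (20 * r ^ 2) := by
    rw [Real.sqrt_mul (by norm_num), Real.sqrt_sq hr.le]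
  rw [norm_cR_sub_cL_eq, hs]
  refine ⟨Real.sqrt_le_sqrt ?_, ?_⟩
  · nlinarith [mul_nonneg hr.le hU, sq_nonneg U]
  · rintro rfl
    congr 1
    ring
end

section
/- Let p₀ = (0, 0, 0), r > 0, and let q = L⁺_V(R⁻_{π/2}(S⁻_U(L⁻_{π/2}(R⁺_T(p₀))))) with 0 ≤ T ≤ π/2, U ≥ 0, and 0 ≤ V ≤ π/2 (a path of type P₁₂ = r⁺_T l⁻_{π/2} s⁻_U r⁻_{π/2} l⁺_V). Then the distance from the initial right-hand circle center to the final left-hand circle center satisfies ‖c_R(p₀) − c_L(q)‖ ≥ √20 · r, with equality when U = 0. -/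
/-!
Each turn fixes the centre of the circle it runs on, and the two circle centres of a pose of
heading `θ` differ by `2 r (-sin θ, cos θ)`. The final `L⁺_V` therefore does not matter, and along
the rest of the path the displacement from the initial RHC centre to the final LHC centre is
`(4 r + U) a + 2 r b` with `a = (sin T, cos T)` and `b = (-cos T, sin T)`: the two quarter turns
make the switch in the middle contribute in the direction `b`, while the outer two switches and
the straight segment all contribute along `a`. Since `a` and `b` are orthonormal, the
squared distance is `(4 r + U)² + (2 r)²` (`dist_sq`), which is at least `20 r²`, with equality
for `U = 0`.
-/

open Real

/-- The squared distance splits along the orthonormal frame `(sin T, cos T)`, `(-cos T, sin T)`. -/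
theorem dist_sq (r T U V : ℝ) :
    ‖cR r ⟨0, 0, 0⟩ -
        cL r (Lplus r V (Rminus r (Real.pi / 2)
          (Sminus U (Lminus r (Real.pi / 2) (Rplus r T ⟨0, 0, 0⟩)))))‖ ^ 2
      = (4 * r + U) ^ 2 + (2 * r) ^ 2 := by
  rw [cL_Lplus, ← Complex.normSq_eq_norm_sq, Complex.normSq_apply]
  simp only [cR, cL, Rminus, Sminus, Lminus, Rplus, Complex.sub_re, Complex.sub_im,
    sub_add_cancel, Real.sin_sub_pi_div_two, Real.cos_sub_pi_div_two, zero_sub, Real.sin_neg,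
    Real.cos_neg, Real.sin_zero, Real.cos_zero]
  linear_combination ((4 * r + U) ^ 2 + (2 * r) ^ 2) * Real.sin_sq_add_cos_sq T

theorem P12_RL_distance_at_least_sqrt20_r (r : ℝ) (hr : 0 < r) (T U V : ℝ)
    (hT₀ : 0 ≤ T) (hT₁ : T ≤ Real.pi / 2) (hU : 0 ≤ U) (hV₀ : 0 ≤ V) (hV₁ : V ≤ Real.pi / 2) :
    ‖cR r ⟨0, 0, 0⟩ -
        cL r (Lplus r V (Rminus r (Real.pi / 2)
          (Sminus U (Lminus r (Real.pi / 2) (Rplus r T ⟨0, 0, 0⟩)))))‖ ≥ Real.sqrt 20 * r ∧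
    (U = 0 →
      ‖cR r ⟨0, 0, 0⟩ -
          cL r (Lplus r V (Rminus r (Real.pi / 2)
            (Sminus U (Lminus r (Real.pi / 2) (Rplus r T ⟨0, 0, 0⟩)))))‖ = Real.sqrt 20 * r) := by
  have h := dist_sq r T U V
  have h20 : (Real.sqrt 20 * r) ^ 2 = 20 * r ^ 2 := by
    rw [mul_pow, Real.sq_sqrt (by norm_num)]
  refine ⟨?_, fun hU0 => ?_⟩
  · refine (sq_le_sq₀ (by positivity) (norm_nonneg _)).1 ?_
    rw [h, h20]
    nlinarith [mul_nonneg hr.le hU]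
  · refine (sq_eq_sq₀ (norm_nonneg _) (by positivity)).1 ?_
    rw [h, h20, hU0]
    ring
end
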